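/- Let k ≥ 1, m = p = 2^k, and let X be the m×m real matrix indexed by s, t ∈ {0,1}^k with entries X_{s,t} = ∏_{j=1}^k (−1)^{(1−s_j) t_j} (the k-fold Kronecker power of the 2×2 matrix [[1,−1],[1,1]]). Let ν_i > 0 for i = 1,…,m. Then an allocation w* ∈ S_m satisfies h(w*) = max_{w ∈ S_m} h(w) if and only if w_i* = ν_i^{−1/2} / Σ_{j=1}^m ν_j^{−1/2} for every i; in particular, the uniform allocation with w_i* = 2^{−k} for all i is A-optimal if and only if ν_1 = ν_2 = ⋯ = ν_m. -/

import Mathlib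

/-!
The matrix `X` satisfies `X * Xᵀ = 2 ^ k • 1`, because the inner product of two rows factors over the
`k` coordinates (`rows_orthogonal`). Hence, writing `N = 2 ^ k`, the trace of the inverse information
matrix is `N⁻¹ * ∑ i, (w i * ν i)⁻¹` when every `w i` is positive, and `h` vanishes when some `w i` is
zero (`hFun_of_pos`, `hFun_of_eq_zero`).

With `a i = (√(ν i))⁻¹` and `A = ∑ i, a i`, the identity
`∑ i, a i ^ 2 / w i - A ^ 2 = ∑ i, w i * (a i / w i - A) ^ 2` on the simplex (`sum_sq_div_sub`) shows
that `h w ≤ N / A ^ 2`, with equality exactly at `w i = a i / A`. The uniform allocation is of this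
form iff all the `a i`, equivalently all the `ν i`, coincide.
-/

open Matrix

noncomputable def infoM {ι : Type*} [Fintype ι] [DecidableEq ι]
    (X : Matrix ι ι ℝ) (ν w : ι → ℝ) : Matrix ι ι ℝ :=
  Xᵀ * Matrix.diagonal (fun i => w i * ν i) * X

noncomputable def hFun {ι : Type*} [Fintype ι] [DecidableEq ι]
    (X : Matrix ι ι ℝ) (ν w : ι → ℝ) : ℝ :=
  if 0 < (infoM X ν w).det then ((infoM X ν w)⁻¹).trace⁻¹ else 0

theorem rows_orthogonal {k : ℕ}
    (X : Matrix (Fin k → Fin 2) (Fin k → Fin 2) ℝ)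
    (hXdef : ∀ s t, X s t = ∏ j, (-1 : ℝ) ^ ((1 - (s j : ℕ)) * (t j : ℕ))) :
    X * Xᵀ = (2 : ℝ) ^ k • (1 : Matrix (Fin k → Fin 2) (Fin k → Fin 2) ℝ) := by
  ext s s'
  have key : ∀ a b : Fin 2, ∑ c : Fin 2,
      (-1 : ℝ) ^ ((1 - (a : ℕ)) * (c : ℕ)) * (-1 : ℝ) ^ ((1 - (b : ℕ)) * (c : ℕ))
        = if a = b then 2 else 0 := by
    intro a b
    fin_cases a <;> fin_cases b <;> norm_num [Fin.sum_univ_two]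
  have h1 : (X * Xᵀ) s s' = ∏ j, if s j = s' j then (2 : ℝ) else 0 := by
    simp only [Matrix.mul_apply, Matrix.transpose_apply, hXdef, ← Finset.prod_mul_distrib, ← key]
    rw [Finset.prod_univ_sum, Fintype.piFinset_univ]
  rw [h1, Matrix.smul_apply, Matrix.one_apply]
  by_cases h : s = s'
  · subst h
    simp
  · obtain ⟨j, hj⟩ := Function.ne_iff.mp h
    rw [Finset.prod_eq_zero (Finset.mem_univ j) (by simp [hj])]
    simp [h]

section Optimality

variable {ι : Type*} [Fintype ι] [DecidableEq ι]

theorem infoM_det (X : Matrix ι ι ℝ) (ν w : ι → ℝ) :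
    (infoM X ν w).det = X.det ^ 2 * ∏ i, w i * ν i := by
  rw [infoM, det_mul, det_mul, det_transpose, det_diagonal]
  ring

theorem hFun_of_eq_zero (X : Matrix ι ι ℝ) (ν w : ι → ℝ) (i : ι) (hi : w i = 0) :
    hFun X ν w = 0 := by
  have h : (infoM X ν w).det = 0 := by
    rw [infoM_det, Finset.prod_eq_zero (Finset.mem_univ i) (by simp [hi]), mul_zero]
  simp [hFun, h]

theorem hFun_of_pos (X : Matrix ι ι ℝ) (N : ℝ) (hN : 0 < N)
    (hX : X * Xᵀ = N • (1 : Matrix ι ι ℝ)) (ν w : ι → ℝ)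
    (hν : ∀ i, 0 < ν i) (hw : ∀ i, 0 < w i) :
    hFun X ν w = N / ∑ i, (√(ν i))⁻¹ ^ 2 / w i := by
  have hdet : X.det ≠ 0 := by
    intro h0
    have h := congrArg Matrix.det hX
    rw [det_mul, h0, zero_mul, det_smul, det_one, mul_one] at h
    exact (pow_pos hN _).ne h
  have hpos : 0 < (infoM X ν w).det := by
    rw [infoM_det]
    have := Finset.prod_pos (s := Finset.univ) fun i _ => mul_pos (hw i) (hν i)
    positivity
  have hX' : Xᵀ * X = N • (1 : Matrix ι ι ℝ) := by
    have h1 : X * (N⁻¹ • Xᵀ) = 1 := by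
      rw [Matrix.mul_smul, hX, smul_smul, inv_mul_cancel₀ hN.ne', one_smul]
    have h2 := _root_.mul_eq_one_comm.mp h1
    rw [Matrix.smul_mul] at h2
    rw [← h2, smul_smul, mul_inv_cancel₀ hN.ne', one_smul]
  have hinv : (infoM X ν w)⁻¹ =
      (N⁻¹ * N⁻¹) • (Xᵀ * Matrix.diagonal (fun i => (w i * ν i)⁻¹) * X) := by
    apply Matrix.inv_eq_right_inv
    have hD : Matrix.diagonal (fun i => w i * ν i) * Matrix.diagonal (fun i => (w i * ν i)⁻¹)
        = (1 : Matrix ι ι ℝ) := by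
      rw [Matrix.diagonal_mul_diagonal, ← Matrix.diagonal_one]
      congr 1
      funext i
      exact mul_inv_cancel₀ (mul_pos (hw i) (hν i)).ne'
    calc infoM X ν w * ((N⁻¹ * N⁻¹) • (Xᵀ * Matrix.diagonal (fun i => (w i * ν i)⁻¹) * X))
        = (N⁻¹ * N⁻¹) • (Xᵀ * (Matrix.diagonal (fun i => w i * ν i) * (X * Xᵀ) *
            Matrix.diagonal (fun i => (w i * ν i)⁻¹)) * X) := by
          simp only [infoM, Matrix.mul_smul, Matrix.mul_assoc]
      _ = 1 := by
          rw [hX, Matrix.mul_smul, Matrix.mul_one, Matrix.smul_mul, hD, Matrix.mul_smul,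
            Matrix.mul_one, Matrix.smul_mul, hX', smul_smul, smul_smul]
          have : N⁻¹ * N⁻¹ * (N * N) = 1 := by field_simp
          rw [← mul_assoc] at this
          rw [this, one_smul]
  have htr : ((infoM X ν w)⁻¹).trace = N⁻¹ * ∑ i, (√(ν i))⁻¹ ^ 2 / w i := by
    rw [hinv, trace_smul, Matrix.mul_assoc, Matrix.trace_mul_comm, Matrix.mul_assoc, hX,
      Matrix.mul_smul, Matrix.mul_one, trace_smul, trace_diagonal, smul_eq_mul, smul_eq_mul,
      mul_assoc, inv_mul_cancel_left₀ hN.ne']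
    congr 1
    refine Finset.sum_congr rfl fun i _ => ?_
    rw [inv_pow, Real.sq_sqrt (hν i).le, mul_inv, div_eq_mul_inv, mul_comm]
  rw [hFun, if_pos hpos, htr, mul_inv, inv_inv, div_eq_mul_inv]

/-- The defect in the Cauchy–Schwarz inequality `(∑ a i) ^ 2 ≤ ∑ a i ^ 2 / w i`, as an explicit
sum of squares. -/
theorem sum_sq_div_sub {ι : Type*} [Fintype ι] (a w : ι → ℝ) (hw : ∀ i, 0 < w i) (hs : ∑ i, w i = 1) :
    ∑ i, w i * (a i / w i - ∑ j, a j) ^ 2 = ∑ i, a i ^ 2 / w i - (∑ j, a j) ^ 2 := by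
  set A := ∑ j, a j with hA
  have h : ∀ i, w i * (a i / w i - A) ^ 2 = a i ^ 2 / w i - 2 * A * a i + A ^ 2 * w i := by
    intro i
    have := (hw i).ne'
    field_simp
    ring
  simp only [h, Finset.sum_add_distrib, Finset.sum_sub_distrib, ← Finset.mul_sum, hs, ← hA]
  ring

/-- A point of the simplex maximises `h` iff its weights are proportional to `(√(ν i))⁻¹`. -/
theorem optimal_iff [Nonempty ι] (X : Matrix ι ι ℝ) (N : ℝ) (hN : 0 < N)
    (hX : X * Xᵀ = N • (1 : Matrix ι ι ℝ)) (ν : ι → ℝ) (hν : ∀ i, 0 < ν i)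
    (w : ι → ℝ) (hw : ∀ i, 0 ≤ w i) (hs : ∑ i, w i = 1) :
    (∀ v : ι → ℝ, (∀ i, 0 ≤ v i) → ∑ i, v i = 1 → hFun X ν v ≤ hFun X ν w)
      ↔ ∀ i, w i = (√(ν i))⁻¹ / ∑ j, (√(ν j))⁻¹ := by
  set a : ι → ℝ := fun i => (√(ν i))⁻¹ with ha
  have hapos : ∀ i, 0 < a i := fun i => inv_pos.mpr (Real.sqrt_pos.mpr (hν i))
  set A := ∑ j, a j with hA
  have hApos : 0 < A := Finset.sum_pos (fun i _ => hapos i) Finset.univ_nonempty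
  have hle : ∀ v : ι → ℝ, (∀ i, 0 ≤ v i) → ∑ i, v i = 1 → hFun X ν v ≤ N / A ^ 2 := by
    intro v hv hvs
    by_cases hvp : ∀ i, 0 < v i
    · rw [hFun_of_pos X N hN hX ν v hν hvp]
      have h1 := sum_sq_div_sub a v hvp hvs
      have h2 : 0 ≤ ∑ i, v i * (a i / v i - ∑ j, a j) ^ 2 :=
        Finset.sum_nonneg fun i _ => mul_nonneg (hv i) (sq_nonneg _)
      have h3 : A ^ 2 ≤ ∑ i, a i ^ 2 / v i := by linarith
      exact div_le_div_of_nonneg_left hN.le (by positivity) h3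
    · push Not at hvp
      obtain ⟨i, hi⟩ := hvp
      rw [hFun_of_eq_zero X ν v i (le_antisymm hi (hv i))]
      positivity
  have hopt : hFun X ν (fun i => a i / A) = N / A ^ 2 := by
    rw [hFun_of_pos X N hN hX ν _ hν fun i => div_pos (hapos i) hApos]
    congr 1
    have : ∀ i, (√(ν i))⁻¹ ^ 2 / (a i / A) = a i * A := by
      intro i
      change a i ^ 2 / (a i / A) = a i * A
      have := (hapos i).ne'
      field_simp
    simp only [this, ← Finset.sum_mul, ← hA]
    ring
  constructor
  · intro hmax
    have hge : N / A ^ 2 ≤ hFun X ν w := by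
      rw [← hopt]
      refine hmax _ (fun i => (div_pos (hapos i) hApos).le) ?_
      rw [← Finset.sum_div, ← hA, div_self hApos.ne']
    have hNA : 0 < N / A ^ 2 := by positivity
    have hwp : ∀ i, 0 < w i := by
      intro i
      refine lt_of_le_of_ne (hw i) fun h0 => ?_
      rw [hFun_of_eq_zero X ν w i h0.symm] at hge
      linarith
    rw [hFun_of_pos X N hN hX ν w hν hwp] at hge
    have h1 := sum_sq_div_sub a w hwp hs
    have hSpos : 0 < ∑ i, a i ^ 2 / w i :=
      Finset.sum_pos (fun i _ => div_pos (pow_pos (hapos i) 2) (hwp i)) Finset.univ_nonempty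
    have h2 : ∑ i, a i ^ 2 / w i ≤ A ^ 2 :=
      (div_le_div_iff_of_pos_left hN (by positivity) hSpos).mp hge
    have hnn : ∀ i ∈ Finset.univ, 0 ≤ w i * (a i / w i - ∑ j, a j) ^ 2 :=
      fun i _ => mul_nonneg (hw i) (sq_nonneg _)
    have h3 : ∑ i, w i * (a i / w i - ∑ j, a j) ^ 2 = 0 :=
      le_antisymm (by linarith) (Finset.sum_nonneg hnn)
    intro i
    have h4 := (Finset.sum_eq_zero_iff_of_nonneg hnn).mp h3 i (Finset.mem_univ i)
    have h5 : a i / w i = A :=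
      sub_eq_zero.mp (pow_eq_zero_iff two_ne_zero |>.mp
        ((mul_eq_zero.mp h4).resolve_left (hwp i).ne'))
    change w i = a i / A
    rw [div_eq_iff (hwp i).ne'] at h5
    rw [eq_div_iff hApos.ne', h5, mul_comm]
  · intro h v hv hvs
    have : w = fun i => a i / A := funext h
    rw [this, hopt]
    exact hle v hv hvs

end Optimality

theorem stmt2 {k : ℕ} (hk : 1 ≤ k)
    (X : Matrix (Fin k → Fin 2) (Fin k → Fin 2) ℝ)
    (hXdef : ∀ s t, X s t = ∏ j, (-1 : ℝ) ^ ((1 - (s j : ℕ)) * (t j : ℕ)))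
    (ν : (Fin k → Fin 2) → ℝ) (hν : ∀ i, 0 < ν i) :
    (∀ w : (Fin k → Fin 2) → ℝ, (∀ i, 0 ≤ w i) → ∑ i, w i = 1 →
      ((∀ v : (Fin k → Fin 2) → ℝ, (∀ i, 0 ≤ v i) → ∑ i, v i = 1 →
          hFun X ν v ≤ hFun X ν w)
        ↔ ∀ i, w i = (Real.sqrt (ν i))⁻¹ / ∑ j, (Real.sqrt (ν j))⁻¹))
    ∧ ((∀ v : (Fin k → Fin 2) → ℝ, (∀ i, 0 ≤ v i) → ∑ i, v i = 1 →
          hFun X ν v ≤ hFun X ν (fun _ => ((2 : ℝ) ^ k)⁻¹))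
        ↔ ∀ i j, ν i = ν j) := by
  have hN : (0 : ℝ) < 2 ^ k := by positivity
  have hopt := optimal_iff X (2 ^ k) hN (rows_orthogonal X hXdef) ν hν
  refine ⟨hopt, ?_⟩
  rw [hopt (fun _ => ((2 : ℝ) ^ k)⁻¹) (fun _ => by positivity) (by simp)]
  have hpos : ∀ i, 0 < (√(ν i))⁻¹ := fun i => inv_pos.mpr (Real.sqrt_pos.mpr (hν i))
  have hApos : 0 < ∑ j, (√(ν j))⁻¹ := Finset.sum_pos (fun i _ => hpos i) Finset.univ_nonempty
  constructor
  · intro h i j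
    have hij := (h i).symm.trans (h j)
    rw [div_left_inj' hApos.ne', _root_.inv_inj] at hij
    exact (Real.sqrt_inj (hν i).le (hν j).le).mp hij
  · intro h i
    have hsum : ∑ j, (√(ν j))⁻¹ = 2 ^ k * (√(ν i))⁻¹ := by
      rw [Finset.sum_congr rfl fun j _ => by rw [h j i]]
      simp
    have := (Real.sqrt_pos.mpr (hν i)).ne'
    rw [hsum]
    field_simp
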